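/- arXiv:2012.15046 — 2 statements merged into one kernel-verified Lean document; each statement's English description precedes it below -/
import Mathlib

section
/- Let B_X := max_{x,x'∈X} ‖x−x'‖₂ be the Euclidean diameter of X and fix ε > 0. Let μ be a Borel probability measure on ℝ^m with ∫‖c‖₂²dμ < ∞, and let d ∈ ℝ^m be such that ∫L(d,c)dμ(c) − inf_{d'∈ℝ^m} ∫L(d',c)dμ(c) ≥ ε. Then ∫‖d−c‖₂²dμ(c) − inf_{d'∈ℝ^m} ∫‖d'−c‖₂²dμ(c) ≥ ε²/B_X² > 0. (In other words, the uniform calibration function of the squared loss satisfies δ_{ℓ_LS}(ε) ≥ ε²/B_X².) -/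
open MeasureTheory
open scoped RealInnerProductSpace

/-- The optimality-gap (true) loss `L(d,c)`. -/
noncomputable def trueLoss {m : ℕ} (X : Set (EuclideanSpace ℝ (Fin m)))
    (f : EuclideanSpace ℝ (Fin m) → ℝ)
    (xs : EuclideanSpace ℝ (Fin m) → EuclideanSpace ℝ (Fin m))
    (d c : EuclideanSpace ℝ (Fin m)) : ℝ :=
  f (xs d) + ⟪c, xs d⟫ - sInf ((fun x => f x + ⟪c, x⟫) '' X)

/-! Both losses are affine in the cost up to a term that does not depend on the decision. Writing
`b` for the mean cost, the excess expected squared loss at `d` is therefore exactly `‖d - b‖ ^ 2`,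
and the excess expected true loss at `d` is exactly the optimality gap of `x*(d)` under `b`. Since
`x*(d)` is optimal under `d`, that gap is at most
`⟪d - b, x*(b) - x*(d)⟫ ≤ ‖d - b‖ * diam X`. The exchange of expectation and loss needs the optimal
value to be integrable, which holds because it is Lipschitz in the cost when `X` is bounded. -/

theorem sub_iInf_eq_of_eq_add_const {ι : Type*} {F G : ι → ℝ} {K : ℝ} {i₀ : ι}
    (hF : ∀ i, F i = G i + K) (hG : ∀ i, 0 ≤ G i) (hG₀ : G i₀ = 0) (i : ι) :
    F i - (⨅ j, F j) = G i := by
  have hleast : IsLeast (Set.range F) (F i₀) :=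
    ⟨⟨i₀, rfl⟩, by rintro _ ⟨j, rfl⟩; linarith [hF j, hF i₀, hG j]⟩
  rw [iInf, hleast.csInf_eq, hF, hF, hG₀]
  ring

theorem integrable_comp_of_lipschitzWith {Ω E F : Type*} [MeasurableSpace Ω] {μ : Measure Ω}
    [IsFiniteMeasure μ] [NormedAddCommGroup E] [NormedAddCommGroup F] {K : NNReal} {g : E → F}
    (hg : LipschitzWith K g) {Y : Ω → E} (hY : Integrable Y μ) :
    Integrable (fun ω => g (Y ω)) μ := by
  have hg₀ : LipschitzWith K (fun y => g y - g 0) := by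
    simpa only [add_zero] using hg.sub (LipschitzWith.const (g 0))
  have hcentered : Integrable (fun ω => g (Y ω) - g 0) μ :=
    memLp_one_iff_integrable.1 (hg₀.comp_memLp (sub_self _) (memLp_one_iff_integrable.2 hY))
  simpa only [Pi.add_def, sub_add_cancel] using hcentered.add (integrable_const (g 0))

section Hilbert

variable {E : Type*} [NormedAddCommGroup E] [InnerProductSpace ℝ E]

section SquaredLoss

variable [CompleteSpace E] {Ω : Type*} [MeasurableSpace Ω] {μ : Measure Ω} [IsProbabilityMeasure μ]
  {Y : Ω → E}

theorem integral_norm_sub_sq (hY : MemLp Y 2 μ) (a : E) :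
    ∫ ω, ‖a - Y ω‖ ^ 2 ∂μ = ‖a - ∫ ω, Y ω ∂μ‖ ^ 2 + ∫ ω, ‖(∫ ω', Y ω' ∂μ) - Y ω‖ ^ 2 ∂μ := by
  set b := ∫ ω, Y ω ∂μ
  have hY₁ : Integrable Y μ := hY.integrable one_le_two
  have hdev : Integrable (fun ω => b - Y ω) μ := (integrable_const b).sub hY₁
  have hdev_sq : Integrable (fun ω => ‖b - Y ω‖ ^ 2) μ :=
    ((memLp_const b).sub hY).integrable_norm_pow two_ne_zero
  have hcross : Integrable (fun ω => 2 * ⟪a - b, b - Y ω⟫) μ := (hdev.const_inner _).const_mul 2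
  have hmain : Integrable (fun ω => ‖a - b‖ ^ 2 + 2 * ⟪a - b, b - Y ω⟫) μ :=
    (integrable_const _).add hcross
  have hcross_zero : ∫ ω, 2 * ⟪a - b, b - Y ω⟫ ∂μ = 0 := by
    rw [integral_const_mul, integral_inner hdev, integral_sub (integrable_const b) hY₁]
    simp [b]
  have hexpand : ∀ ω, ‖a - Y ω‖ ^ 2 = ‖a - b‖ ^ 2 + 2 * ⟪a - b, b - Y ω⟫ + ‖b - Y ω‖ ^ 2 :=
    fun ω => by rw [← norm_add_sq_real, sub_add_sub_cancel]
  simp only [hexpand]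
  rw [integral_add hmain hdev_sq, integral_add (integrable_const _) hcross, hcross_zero]
  simp

theorem integral_norm_sub_sq_sub_iInf (hY : MemLp Y 2 μ) (a : E) :
    (∫ ω, ‖a - Y ω‖ ^ 2 ∂μ) - (⨅ a', ∫ ω, ‖a' - Y ω‖ ^ 2 ∂μ) = ‖a - ∫ ω, Y ω ∂μ‖ ^ 2 :=
  sub_iInf_eq_of_eq_add_const (i₀ := ∫ ω, Y ω ∂μ) (integral_norm_sub_sq hY)
    (fun _ => sq_nonneg _) (by simp) a

end SquaredLoss

/-- The optimal value `min_{x ∈ X} (f x + cᵀx)` of the decision problem with cost vector `c`. It is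
encoded by `sInf`, so it is `0` when `X` is empty or the objective is unbounded below on `X`. -/
noncomputable def optimalValue (X : Set E) (f : E → ℝ) (c : E) : ℝ :=
  sInf ((fun x => f x + ⟪c, x⟫) '' X)

/-- The suboptimality of the decision `x` under the cost vector `c`. The paper's true loss `L(d,c)`
is the optimality gap of the decision `x*(d)`. -/
noncomputable def optimalityGap (X : Set E) (f : E → ℝ) (x c : E) : ℝ :=
  f x + ⟪c, x⟫ - optimalValue X f c

/-- `xs` is a selection of minimizers, the paper's `x*`: `xs c` minimizes `f x + cᵀx` over `X`, for
every cost vector `c`. -/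
structure IsMinimizerSelection (X : Set E) (f : E → ℝ) (xs : E → E) : Prop where
  mem : ∀ c, xs c ∈ X
  le : ∀ c, ∀ x ∈ X, f (xs c) + ⟪c, xs c⟫ ≤ f x + ⟪c, x⟫

namespace IsMinimizerSelection

variable {X : Set E} {f : E → ℝ} {xs : E → E}

theorem optimalValue_eq (hxs : IsMinimizerSelection X f xs) (c : E) :
    optimalValue X f c = f (xs c) + ⟪c, xs c⟫ :=
  IsLeast.csInf_eq
    ⟨Set.mem_image_of_mem _ (hxs.mem c), Set.forall_mem_image.2 (hxs.le c)⟩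

theorem optimalityGap_self (hxs : IsMinimizerSelection X f xs) (c : E) :
    optimalityGap X f (xs c) c = 0 := by
  rw [optimalityGap, hxs.optimalValue_eq, sub_self]

theorem optimalityGap_nonneg (hxs : IsMinimizerSelection X f xs) {x : E} (hx : x ∈ X) (c : E) :
    0 ≤ optimalityGap X f x c := by
  rw [optimalityGap, hxs.optimalValue_eq]
  exact sub_nonneg.2 (hxs.le c x hx)

theorem optimalityGap_le_norm_sub_mul_diam (hxs : IsMinimizerSelection X f xs)
    (hX : Bornology.IsBounded X) (d c : E) :
    optimalityGap X f (xs d) c ≤ ‖d - c‖ * Metric.diam X := by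
  have hdiam : ‖xs c - xs d‖ ≤ Metric.diam X := by
    rw [← dist_eq_norm]
    exact Metric.dist_le_diam_of_mem hX (hxs.mem c) (hxs.mem d)
  calc optimalityGap X f (xs d) c
      = f (xs d) + ⟪c, xs d⟫ - (f (xs c) + ⟪c, xs c⟫) := by
        rw [optimalityGap, hxs.optimalValue_eq]
    _ ≤ ⟪d - c, xs c - xs d⟫ := by
        simp only [inner_sub_left, inner_sub_right]
        linarith [hxs.le d (xs c) (hxs.mem c)]
    _ ≤ ‖d - c‖ * ‖xs c - xs d‖ := real_inner_le_norm _ _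
    _ ≤ ‖d - c‖ * Metric.diam X := by gcongr

theorem exists_lipschitzWith_optimalValue (hxs : IsMinimizerSelection X f xs)
    (hX : Bornology.IsBounded X) : ∃ K, LipschitzWith K (optimalValue X f) := by
  obtain ⟨R, hR⟩ := hX.exists_norm_le
  refine ⟨_, LipschitzWith.of_le_add_mul' R fun c c' => ?_⟩
  calc optimalValue X f c
      ≤ f (xs c') + ⟪c, xs c'⟫ := by
        rw [hxs.optimalValue_eq]
        exact hxs.le c (xs c') (hxs.mem c')
    _ = optimalValue X f c' + ⟪xs c', c - c'⟫ := by
        rw [hxs.optimalValue_eq, inner_sub_right, real_inner_comm c, real_inner_comm c']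
        ring
    _ ≤ optimalValue X f c' + ‖xs c'‖ * ‖c - c'‖ := by
        gcongr
        exact real_inner_le_norm _ _
    _ ≤ optimalValue X f c' + R * dist c c' := by
        rw [dist_eq_norm]
        gcongr
        exact hR _ (hxs.mem c')

section ExpectedLoss

variable [CompleteSpace E] {Ω : Type*} [MeasurableSpace Ω] {μ : Measure Ω} [IsProbabilityMeasure μ]
  {Y : Ω → E}

theorem integral_optimalityGap (hxs : IsMinimizerSelection X f xs) (hX : Bornology.IsBounded X)
    (hY : Integrable Y μ) (x : E) :
    ∫ ω, optimalityGap X f x (Y ω) ∂μ = optimalityGap X f x (∫ ω, Y ω ∂μ) +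
      (optimalValue X f (∫ ω, Y ω ∂μ) - ∫ ω, optimalValue X f (Y ω) ∂μ) := by
  obtain ⟨K, hlip⟩ := hxs.exists_lipschitzWith_optimalValue hX
  have hvalue : Integrable (fun ω => optimalValue X f (Y ω)) μ :=
    integrable_comp_of_lipschitzWith hlip hY
  have hinner : Integrable (fun ω => ⟪Y ω, x⟫) μ := hY.inner_const x
  have hcost : Integrable (fun ω => f x + ⟪Y ω, x⟫) μ := (integrable_const _).add hinner
  have hinner_eq : ∫ ω, ⟪Y ω, x⟫ ∂μ = ⟪∫ ω, Y ω ∂μ, x⟫ := by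
    simp only [real_inner_comm x]
    exact integral_inner hY x
  simp only [optimalityGap]
  rw [integral_sub hcost hvalue, integral_add (integrable_const _) hinner, hinner_eq,
    integral_const, probReal_univ, one_smul]
  ring

theorem integral_optimalityGap_sub_iInf (hxs : IsMinimizerSelection X f xs)
    (hX : Bornology.IsBounded X) (hY : Integrable Y μ) (d : E) :
    (∫ ω, optimalityGap X f (xs d) (Y ω) ∂μ) - (⨅ d', ∫ ω, optimalityGap X f (xs d') (Y ω) ∂μ) =
      optimalityGap X f (xs d) (∫ ω, Y ω ∂μ) :=
  sub_iInf_eq_of_eq_add_const (fun d' => hxs.integral_optimalityGap hX hY (xs d'))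
    (fun d' => hxs.optimalityGap_nonneg (hxs.mem d') _) (hxs.optimalityGap_self _) d

end ExpectedLoss

end IsMinimizerSelection

theorem statement8_general [CompleteSpace E] {X : Set E} (hX : Bornology.IsBounded X) {f : E → ℝ}
    {xs : E → E} (hxs : IsMinimizerSelection X f xs) {ε : ℝ} (hε : 0 < ε)
    {Ω : Type*} [MeasurableSpace Ω] {μ : Measure Ω} [IsProbabilityMeasure μ]
    {Y : Ω → E} (hY : MemLp Y 2 μ) {d : E}
    (hd : ε ≤ (∫ ω, optimalityGap X f (xs d) (Y ω) ∂μ) -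
      (⨅ d', ∫ ω, optimalityGap X f (xs d') (Y ω) ∂μ)) :
    ε ^ 2 / (Metric.diam X) ^ 2 ≤
        (∫ ω, ‖d - Y ω‖ ^ 2 ∂μ) - (⨅ d', ∫ ω, ‖d' - Y ω‖ ^ 2 ∂μ) ∧
      0 < ε ^ 2 / (Metric.diam X) ^ 2 := by
  rw [hxs.integral_optimalityGap_sub_iInf hX (hY.integrable one_le_two)] at hd
  rw [integral_norm_sub_sq_sub_iInf hY]
  have hε_le : ε ≤ ‖d - ∫ ω, Y ω ∂μ‖ * Metric.diam X :=
    hd.trans (hxs.optimalityGap_le_norm_sub_mul_diam hX d _)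
  have hdiam : 0 < Metric.diam X :=
    pos_of_mul_pos_right (hε.trans_le hε_le) (norm_nonneg _)
  refine ⟨?_, by positivity⟩
  rw [← div_pow]
  gcongr
  exact (div_le_iff₀ hdiam).2 hε_le

end Hilbert

/-- the squared loss is uniformly calibrated with calibration function at least
`ε² / B_X²`: if the excess expected true loss at `d` is at least `ε`, then the excess expected
squared loss at `d` is at least `ε² / B_X² > 0`, where `B_X = diam X`. -/
theorem statement8 {m : ℕ}
    (X : Set (EuclideanSpace ℝ (Fin m)))
    (hXne : X.Nonempty) (hXconv : Convex ℝ X) (hXcomp : IsCompact X)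
    (f : EuclideanSpace ℝ (Fin m) → ℝ)
    (hfconv : ConvexOn ℝ X f) (hfcont : ContinuousOn f X)
    (xs : EuclideanSpace ℝ (Fin m) → EuclideanSpace ℝ (Fin m))
    (hxsmem : ∀ d, xs d ∈ X)
    (hxsmin : ∀ d, ∀ x ∈ X, f (xs d) + ⟪d, xs d⟫ ≤ f x + ⟪d, x⟫)
    (ε : ℝ) (hε : 0 < ε)
    (μ : Measure (EuclideanSpace ℝ (Fin m))) [IsProbabilityMeasure μ]
    (hμ : Integrable (fun c : EuclideanSpace ℝ (Fin m) => ‖c‖ ^ 2) μ)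
    (d : EuclideanSpace ℝ (Fin m))
    (hd : ε ≤ (∫ c, trueLoss X f xs d c ∂μ) - (⨅ d', ∫ c, trueLoss X f xs d' c ∂μ)) :
    ε ^ 2 / (Metric.diam X) ^ 2
      ≤ (∫ c, ‖d - c‖ ^ 2 ∂μ) - (⨅ d' : EuclideanSpace ℝ (Fin m), ∫ c, ‖d' - c‖ ^ 2 ∂μ) ∧
    0 < ε ^ 2 / (Metric.diam X) ^ 2 := by
  exact statement8_general hXcomp.isBounded ⟨hxsmem, hxsmin⟩ hε
    ((memLp_two_iff_integrable_sq_norm aestronglyMeasurable_id).2 hμ) hd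
end

section
/- Fix m ≥ 3 and p ∈ ℝ^m with p_j > 0 for all j and Σ_{j=1}^m p_j = 1, and define F(d) := Σ_{j=1}^m p_j · ( 2d_j − min_{j'∈[m]} (2d_{j'} − 𝟙[j' ≠ j]) ) for d ∈ ℝ^m, where 𝟙[j' ≠ j] is 1 if j' ≠ j and 0 otherwise (F(d) is the expected SPO+ loss for multiclass classification). Then: (i) if max_{j∈[m]} p_j < 1/2, the set of minimizers of F is exactly {α·𝟙_m : α ∈ ℝ}, the set of constant vectors; (ii) if there exists j* with p_{j*} > 1/2, the set of minimizers of F is exactly {(α·𝟙_m − e_{j*})/2 : α ∈ ℝ}, where e_{j*} is the j*-th standard basis vector. In particular, in case (i) the SPO+ loss is not Fisher consistent for the multiclass 0-1 loss. -/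
/-!
Write `L_j` for the SPO+ loss of `d` at the class `j`, so that `F(d) = ∑ p_j L_j`. Maximising over
the index `k` in `L_j = max_k (2 d_j - 2 d_k + 𝟙[k ≠ j])` shows `L_j ≥ 0` and, by adding the two
bounds for a pair of distinct classes, `L_j + L_k ≥ 2`. Hence, for every class `k`,
`F(d) ≥ p_k L_k + (1 - p_k) (2 - L_k) = 1 + (1 - 2 p_k) (1 - L_k)`.

If every `p_k` is below `1/2`, then either all `L_k ≥ 1` or this bound exceeds `1`; so the minimum
is `1`, attained exactly when all losses are `1`. If `p_s > 1/2`, the bound at `k = s` together with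
`L_s ≥ 0` gives the minimum `2 (1 - p_s)`, attained exactly when `L_s = 0` and all other losses are
`2`. These loss profiles determine `d` up to an additive constant.
-/

/-- The expected SPO+ loss for multiclass classification:
`F(d) = Σ_j p_j (2 d_j − min_{j'} (2 d_{j'} − 𝟙[j' ≠ j]))`. -/
noncomputable def Fspo {m : ℕ} (p : Fin m → ℝ) (d : Fin m → ℝ) : ℝ :=
  ∑ j, p j * (2 * d j - ⨅ j' : Fin m, (2 * d j' - if j' ≠ j then 1 else 0))

section WeightedSum

variable {ι : Type*} [Fintype ι]

theorem sum_mul_ite_eq {R : Type*} [CommRing R] [DecidableEq ι] (p : ι → R) (k : ι) (a b : R) :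
    ∑ j, p j * (if j = k then a else b) = p k * a + (∑ j, p j - p k) * b := by
  have split_term (j : ι) :
      p j * (if j = k then a else b) = p j * b + if j = k then p j * (a - b) else 0 := by
    split_ifs <;> ring
  simp only [split_term, Finset.sum_add_distrib, ← Finset.sum_mul, Finset.sum_ite_eq',
    Finset.mem_univ, if_true]
  ring

variable {p L : ι → ℝ}

theorem eq_of_le_of_sum_mul_le {M : ι → ℝ} (hp : ∀ j, 0 < p j) (hML : M ≤ L)
    (h : ∑ j, p j * L j ≤ ∑ j, p j * M j) : L = M := by
  have mul_le (j : ι) : p j * M j ≤ p j * L j := mul_le_mul_of_nonneg_left (hML j) (hp j).le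
  have mul_eq := (Finset.sum_eq_sum_iff_of_le fun j _ => mul_le j).mp
    (le_antisymm (Finset.sum_le_sum fun j _ => mul_le j) h)
  exact funext fun j => (mul_left_cancel₀ (hp j).ne' (mul_eq j (Finset.mem_univ j))).symm

theorem le_sum_mul_of_pairwise_two_le_add (hp : ∀ j, 0 ≤ p j) (hsum : ∑ j, p j = 1)
    (hL : Pairwise fun i j => 2 ≤ L i + L j) (k : ι) :
    1 + (1 - 2 * p k) * (1 - L k) ≤ ∑ j, p j * L j := by
  classical
  calc 1 + (1 - 2 * p k) * (1 - L k)
      = ∑ j, p j * (if j = k then L k else 2 - L k) := by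
        rw [sum_mul_ite_eq, hsum]
        ring
    _ ≤ ∑ j, p j * L j := by
        refine Finset.sum_le_sum fun j _ => mul_le_mul_of_nonneg_left ?_ (hp j)
        split_ifs with hjk
        · rw [hjk]
        · linarith [hL hjk]

theorem eq_one_of_sum_mul_le_one (hp : ∀ j, 0 < p j) (hsum : ∑ j, p j = 1)
    (hhalf : ∀ j, p j < 1 / 2) (hL : Pairwise fun i j => 2 ≤ L i + L j)
    (h : ∑ j, p j * L j ≤ 1) : L = 1 := by
  have one_le : 1 ≤ L := by
    intro k
    by_contra! hk
    have gap_pos : 0 < (1 - 2 * p k) * (1 - L k) :=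
      mul_pos (by linarith [hhalf k]) (sub_pos.mpr hk)
    linarith [le_sum_mul_of_pairwise_two_le_add (fun j => (hp j).le) hsum hL k]
  exact eq_of_le_of_sum_mul_le hp one_le (by simpa [hsum] using h)

theorem eq_ite_of_sum_mul_le [DecidableEq ι] (hp : ∀ j, 0 < p j) (hsum : ∑ j, p j = 1) {s : ι}
    (hs : 1 / 2 < p s) (hL : Pairwise fun i j => 2 ≤ L i + L j) (hLs : 0 ≤ L s)
    (h : ∑ j, p j * L j ≤ ∑ j, p j * (if j = s then 0 else 2)) :
    L = fun j => if j = s then 0 else 2 := by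
  have Ls_nonpos : L s ≤ 0 := by
    have lower := le_sum_mul_of_pairwise_two_le_add (fun j => (hp j).le) hsum hL s
    rw [sum_mul_ite_eq, hsum] at h
    exact nonpos_of_mul_nonpos_right (by linarith : (2 * p s - 1) * L s ≤ 0) (by linarith)
  refine eq_of_le_of_sum_mul_le hp (fun j => ?_) h
  dsimp only
  split_ifs with hjs
  · rwa [hjs]
  · linarith [hL hjs]

end WeightedSum

section Loss

variable {ι : Type*} [DecidableEq ι]

/-- The SPO+ loss of the prediction `d` for multiclass classification when the true class is `j`,
for an arbitrary type `ι` of classes. For infinite `ι` the infimum may take a junk value. -/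
noncomputable def spoPlusLoss (d : ι → ℝ) (j : ι) : ℝ :=
  2 * d j - ⨅ j' : ι, (2 * d j' - if j' ≠ j then 1 else 0)

variable [Finite ι]

theorem spoPlusLoss_le_iff {d : ι → ℝ} {j : ι} {c : ℝ} :
    spoPlusLoss d j ≤ c ↔ 0 ≤ c ∧ ∀ k ≠ j, 2 * d j - 2 * d k + 1 ≤ c := by
  have : Nonempty ι := ⟨j⟩
  rw [spoPlusLoss, sub_le_comm, le_ciInf_iff (Set.finite_range _).bddBelow]
  constructor
  · intro h
    refine ⟨by simpa using h j, fun k hk => ?_⟩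
    have := h k
    rw [if_pos hk] at this
    linarith
  · rintro ⟨hc, h⟩ k
    split_ifs with hk
    · linarith [h k hk]
    · rw [not_not.mp hk]
      linarith

theorem spoPlusLoss_nonneg (d : ι → ℝ) (j : ι) : 0 ≤ spoPlusLoss d j :=
  (spoPlusLoss_le_iff.mp le_rfl).1

theorem pairwise_two_le_spoPlusLoss_add (d : ι → ℝ) :
    Pairwise fun i j => 2 ≤ spoPlusLoss d i + spoPlusLoss d j := by
  intro i j hij
  have bound_i := (spoPlusLoss_le_iff.mp (le_refl (spoPlusLoss d i))).2 j hij.symm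
  have bound_j := (spoPlusLoss_le_iff.mp (le_refl (spoPlusLoss d j))).2 i hij
  linarith

theorem spoPlusLoss_le_one_iff [Nonempty ι] {d : ι → ℝ} :
    spoPlusLoss d ≤ 1 ↔ ∃ α, d = fun _ => α := by
  constructor
  · intro h
    have le (i j : ι) : d i ≤ d j := by
      rcases eq_or_ne j i with rfl | hji
      · rfl
      · have bound : 2 * d i - 2 * d j + 1 ≤ 1 := (spoPlusLoss_le_iff.mp (h i)).2 j hji
        linarith
    exact ⟨d (Classical.arbitrary ι), funext fun j => le_antisymm (le _ _) (le _ _)⟩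
  · rintro ⟨α, rfl⟩ j
    exact spoPlusLoss_le_iff.mpr ⟨zero_le_one, fun k _ => by simp⟩

theorem spoPlusLoss_le_ite_iff {d : ι → ℝ} {s : ι} :
    (spoPlusLoss d ≤ fun j => if j = s then 0 else 2) ↔
      ∃ α, d = fun j => (α - if j = s then 1 else 0) / 2 := by
  constructor
  · intro h
    refine ⟨2 * d s + 1, funext fun j => ?_⟩
    split_ifs with hjs
    · rw [hjs]
      ring
    · have lower : 2 * d s - 2 * d j + 1 ≤ 0 :=
        (spoPlusLoss_le_iff.mp ((h s).trans_eq (if_pos rfl))).2 j hjs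
      have upper : 2 * d j - 2 * d s + 1 ≤ 2 :=
        (spoPlusLoss_le_iff.mp ((h j).trans_eq (if_neg hjs))).2 s (Ne.symm hjs)
      linarith
  · rintro ⟨α, rfl⟩ j
    refine spoPlusLoss_le_iff.mpr ⟨by dsimp only; split_ifs <;> norm_num, fun k hkj => ?_⟩
    by_cases hjs : j = s
    · have hks : k ≠ s := hjs ▸ hkj
      simp only [if_pos hjs, if_neg hks]
      linarith
    · simp only [if_neg hjs]
      split_ifs <;> linarith

end Loss

section Risk

variable {ι : Type*} [Fintype ι] [DecidableEq ι]

/-- The expected SPO+ loss of the prediction `d` when the class `j` has probability `p j`. For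
`ι = Fin m` it unfolds to `Fspo`. -/
noncomputable def spoPlusRisk (p d : ι → ℝ) : ℝ :=
  ∑ j, p j * spoPlusLoss d j

variable {p : ι → ℝ}

theorem setOf_minimizer_spoPlusRisk_eq {M : ι → ℝ} (hp : ∀ j, 0 ≤ p j)
    (hM : ∀ d, spoPlusRisk p d ≤ ∑ j, p j * M j → spoPlusLoss d = M)
    (hattained : ∃ d, spoPlusLoss d ≤ M) :
    {d | ∀ d', spoPlusRisk p d ≤ spoPlusRisk p d'} = {d | spoPlusLoss d ≤ M} := by
  have risk_le {d : ι → ℝ} (h : spoPlusLoss d ≤ M) : spoPlusRisk p d ≤ ∑ j, p j * M j :=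
    Finset.sum_le_sum fun j _ => mul_le_mul_of_nonneg_left (h j) (hp j)
  have le_risk (d : ι → ℝ) : ∑ j, p j * M j ≤ spoPlusRisk p d := by
    by_contra! h
    exact h.ne (by rw [spoPlusRisk, hM d h.le])
  obtain ⟨d₀, hd₀⟩ := hattained
  ext d
  exact ⟨fun hd => (hM d ((hd d₀).trans (risk_le hd₀))).le,
    fun hd d' => (risk_le hd).trans (le_risk d')⟩

theorem setOf_minimizer_spoPlusRisk_of_forall_lt_half (hp : ∀ j, 0 < p j) (hsum : ∑ j, p j = 1)
    (hhalf : ∀ j, p j < 1 / 2) :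
    {d | ∀ d', spoPlusRisk p d ≤ spoPlusRisk p d'} = {d | ∃ α : ℝ, d = fun _ => α} := by
  have : Nonempty ι := by
    by_contra! h
    simp at hsum
  rw [setOf_minimizer_spoPlusRisk_eq (M := 1) (fun j => (hp j).le)]
  · simp only [spoPlusLoss_le_one_iff]
  · intro d hd
    exact eq_one_of_sum_mul_le_one hp hsum hhalf (pairwise_two_le_spoPlusLoss_add d)
      (by simpa [spoPlusRisk, hsum] using hd)
  · exact ⟨fun _ => 0, spoPlusLoss_le_one_iff.mpr ⟨0, rfl⟩⟩

theorem setOf_minimizer_spoPlusRisk_of_half_lt (hp : ∀ j, 0 < p j) (hsum : ∑ j, p j = 1) {s : ι}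
    (hs : 1 / 2 < p s) :
    {d | ∀ d', spoPlusRisk p d ≤ spoPlusRisk p d'} =
      {d | ∃ α : ℝ, d = fun j => (α - if j = s then 1 else 0) / 2} := by
  rw [setOf_minimizer_spoPlusRisk_eq (M := fun j => if j = s then 0 else 2) (fun j => (hp j).le)]
  · simp only [spoPlusLoss_le_ite_iff]
  · intro d hd
    exact eq_ite_of_sum_mul_le hp hsum hs (pairwise_two_le_spoPlusLoss_add d)
      (spoPlusLoss_nonneg d s) hd
  · exact ⟨_, spoPlusLoss_le_ite_iff.mpr ⟨0, rfl⟩⟩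

end Risk

theorem statement18_general {ι : Type*} [Fintype ι] [DecidableEq ι] (p : ι → ℝ)
    (hp : ∀ j, 0 < p j) (hsum : ∑ j, p j = 1) :
    ((∀ j, p j < 1 / 2) →
      {d : ι → ℝ | ∀ d', spoPlusRisk p d ≤ spoPlusRisk p d'}
        = {d : ι → ℝ | ∃ α : ℝ, d = fun _ => α}) ∧
    (∀ jstar : ι, 1 / 2 < p jstar →
      {d : ι → ℝ | ∀ d', spoPlusRisk p d ≤ spoPlusRisk p d'}
        = {d : ι → ℝ | ∃ α : ℝ, d = fun j => (α - if j = jstar then 1 else 0) / 2}) ∧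
    ((∀ j, p j < 1 / 2) → (∃ j j', p j ≠ p j') →
      ∃ d : ι → ℝ, (∀ d', spoPlusRisk p d ≤ spoPlusRisk p d') ∧
        ¬ ({j | ∀ j', d j ≤ d j'} ⊆ {j | ∀ j', p j' ≤ p j})) := by
  refine ⟨setOf_minimizer_spoPlusRisk_of_forall_lt_half hp hsum,
    fun _ => setOf_minimizer_spoPlusRisk_of_half_lt hp hsum, ?_⟩
  rintro hhalf ⟨a, b, hab⟩
  have zero_minimizes : (fun _ => 0 : ι → ℝ) ∈
      {d | ∀ d', spoPlusRisk p d ≤ spoPlusRisk p d'} := by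
    rw [setOf_minimizer_spoPlusRisk_of_forall_lt_half hp hsum hhalf]
    exact ⟨0, rfl⟩
  refine ⟨fun _ => 0, zero_minimizes, fun hsub => hab ?_⟩
  have p_maximal (j : ι) : ∀ j', p j' ≤ p j := hsub fun _ => le_rfl
  exact le_antisymm (p_maximal b a) (p_maximal a b)

/-- (i) if all `p_j < 1/2` the minimizers of `F` are exactly the constant
vectors; (ii) if some `p_{j*} > 1/2` the minimizers are exactly `(α𝟙 − e_{j*})/2`, `α ∈ ℝ`;
in particular in case (i) (with `p` non-constant) SPO+ is not Fisher consistent: some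
minimizer's argmin set is not contained in the argmax set of `p`. -/
theorem statement18 {m : ℕ} (hm : 3 ≤ m) (p : Fin m → ℝ)
    (hp : ∀ j, 0 < p j) (hsum : ∑ j, p j = 1) :
    ((∀ j, p j < 1 / 2) →
      {d : Fin m → ℝ | ∀ d', Fspo p d ≤ Fspo p d'}
        = {d : Fin m → ℝ | ∃ α : ℝ, d = fun _ => α}) ∧
    (∀ jstar : Fin m, 1 / 2 < p jstar →
      {d : Fin m → ℝ | ∀ d', Fspo p d ≤ Fspo p d'}
        = {d : Fin m → ℝ | ∃ α : ℝ, d = fun j => (α - if j = jstar then 1 else 0) / 2}) ∧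
    ((∀ j, p j < 1 / 2) → (∃ j j', p j ≠ p j') →
      ∃ d : Fin m → ℝ, (∀ d', Fspo p d ≤ Fspo p d') ∧
        ¬ ({j | ∀ j', d j ≤ d j'} ⊆ {j | ∀ j', p j' ≤ p j})) :=
  statement18_general p hp hsum
end
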